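/- Fix u₀ ∈ (0,1). For a function F : [0,∞) → ℝ, the following are equivalent: (1) F applied entrywise maps M({1,u₀}) ∪ M({0,1}) into M(ℝ), and F(a)·F(b) ≥ F(√(ab))² for all a, b ≥ 0; (2) F applied entrywise maps M([0,1]) into itself; (3) F agrees on (0,∞) with an absolutely monotonic entire function and 0 ≤ F(0) ≤ lim_{ε→0⁺} F(ε). Moreover, if F is continuous on (0,∞), then the inequality hypothesis F(a)F(b) ≥ F(√(ab))² in (1) may be omitted. -/

import Mathlib

open MeasureTheory Filter Set
open scoped ENNReal

/-- An admissible measure: a non-negative Borel measure on `ℝ` all of whose absolute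
moments are finite. -/
def IsAdmissible (μ : Measure ℝ) : Prop := ∀ k : ℕ, Integrable (fun x => x ^ k) μ

/-- The `k`-th power moment of a measure. -/
noncomputable def moment (μ : Measure ℝ) (k : ℕ) : ℝ := ∫ x, x ^ k ∂μ

/-- `momentSet K` is the set of moment sequences of admissible measures supported in `K`. -/
def momentSet (K : Set ℝ) : Set (ℕ → ℝ) :=
  {s | ∃ μ : Measure ℝ, IsAdmissible μ ∧ μ Kᶜ = 0 ∧ ∀ k, s k = moment μ k}

/-- An absolutely monotonic entire function: a power series with non-negative
coefficients converging at every real point. -/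
def AbsolutelyMonotonicEntire (G : ℝ → ℝ) : Prop :=
  ∃ c : ℕ → ℝ, (∀ n, 0 ≤ c n) ∧ ∀ x : ℝ, HasSum (fun n => c n * x ^ n) (G x)


lemma aux_taylor {f : ℝ → ℝ} (hf : ContDiff ℝ (⊤ : ℕ∞) f) {x₀ x : ℝ} (hx : x₀ < x) (n : ℕ) :
    ∃ ξ ∈ Ioo x₀ x, f x = ∑ k ∈ Finset.range (n+1), iteratedDeriv k f x₀ / k.factorial * (x - x₀)^k
      + iteratedDeriv (n+1) f ξ / (n+1).factorial * (x-x₀)^(n+1) := by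
  obtain ⟨ξ, hξ, h⟩ := taylor_mean_remainder_lagrange_iteratedDeriv (n := n) hx.ne
    ((hf.of_le (by exact_mod_cast le_top)).contDiffOn (s := uIcc x₀ x))
  rw [uIoo_of_le hx.le] at hξ
  refine ⟨ξ, hξ, ?_⟩
  have h2 : taylorWithinEval f n (uIcc x₀ x) x₀ x =
      ∑ k ∈ Finset.range (n+1), iteratedDeriv k f x₀ / k.factorial * (x - x₀)^k := by
    rw [taylor_within_apply]
    refine Finset.sum_congr rfl fun k _ => ?_
    rw [iteratedDerivWithin_eq_iteratedFDerivWithin, iteratedFDerivWithin_eq_iteratedFDeriv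
      (uniqueDiffOn_uIcc hx.ne) ((hf.of_le (by exact_mod_cast le_top)).contDiffAt) left_mem_uIcc,
      ← iteratedDeriv_eq_iteratedFDeriv, smul_eq_mul]
    ring
  rw [h2] at h
  rw [← sub_eq_iff_eq_add', h]
  ring

lemma aux_bernstein {f : ℝ → ℝ} (hf : ContDiff ℝ (⊤ : ℕ∞) f)
    (h0 : ∀ n, ∀ x, 0 ≤ x → 0 ≤ iteratedDeriv n f x) (x : ℝ) (hx : 0 ≤ x) :
    HasSum (fun n => iteratedDeriv n f 0 / n.factorial * x ^ n) (f x) := by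
  rcases hx.eq_or_lt with rfl | hx
  · convert hasSum_single (f := fun n => iteratedDeriv n f 0 / n.factorial * (0:ℝ) ^ n) 0 ?_ using 1
    · simp
    · intro b hb; simp [hb]
  have hnn : ∀ n, 0 ≤ iteratedDeriv n f 0 / n.factorial * x ^ n := fun n => by
    have := h0 n 0 le_rfl
    positivity
  rw [hasSum_iff_tendsto_nat_of_nonneg hnn]
  rw [← tendsto_add_atTop_iff_nat 1]
  have hbd : ∀ n : ℕ, f x - ∑ i ∈ Finset.range (n+1), iteratedDeriv i f 0 / i.factorial * x ^ i
      ≤ f (x + 2 * x) * (1/2)^(n+1) := by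
    intro n
    obtain ⟨ξ, hξ, h⟩ := aux_taylor hf hx n
    simp only [sub_zero] at h
    have hmono : iteratedDeriv (n+1) f ξ ≤ iteratedDeriv (n+1) f x := by
      have : MonotoneOn (iteratedDeriv (n+1) f) (Ici 0) := by
        apply monotoneOn_of_deriv_nonneg (convex_Ici 0)
        · exact (hf.continuous_iteratedDeriv _ (by exact_mod_cast le_top)).continuousOn
        · exact (hf.differentiable_iteratedDeriv (n+1)
            (by exact_mod_cast WithTop.coe_lt_top _)).differentiableOn
        · intro y hy
          rw [interior_Ici] at hy
          rw [← iteratedDeriv_succ]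
          exact h0 _ _ (le_of_lt hy)
      exact this hξ.1.le hx.le hξ.2.le
    obtain ⟨η, hη, h'⟩ := aux_taylor hf (show x < x + 2 * x by linarith) (n+1)
    rw [Finset.sum_range_succ] at h'
    have h1 : 0 ≤ ∑ k ∈ Finset.range (n+1), iteratedDeriv k f x / k.factorial * (x + 2 * x - x)^k := by
      refine Finset.sum_nonneg fun k _ => ?_
      have := h0 k x hx.le
      have : 0 ≤ x + 2 * x - x := by linarith
      positivity
    have h2 : 0 ≤ iteratedDeriv (n+1+1) f η / (n+1+1).factorial * (x+2*x-x)^(n+1+1) := by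
      have := h0 (n+1+1) η (hx.le.trans hη.1.le)
      have : 0 ≤ x + 2 * x - x := by linarith
      positivity
    have h3 : iteratedDeriv (n+1) f x / (n+1).factorial * (2*x)^(n+1) ≤ f (x + 2 * x) := by
      have : x + 2 * x - x = 2 * x := by ring
      rw [this] at h' h1 h2
      linarith
    have h4 : iteratedDeriv (n+1) f ξ / (n+1).factorial * x^(n+1) ≤
        iteratedDeriv (n+1) f x / (n+1).factorial * x^(n+1) := by gcongr
    have h5 : iteratedDeriv (n+1) f x / (n+1).factorial * x^(n+1) =
        iteratedDeriv (n+1) f x / (n+1).factorial * (2*x)^(n+1) * (1/2)^(n+1) := by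
      rw [mul_assoc, ← mul_pow]; congr 2; ring
    have h6 := mul_le_mul_of_nonneg_right h3 (show (0:ℝ) ≤ (1/2)^(n+1) by positivity)
    linarith
  have hbd2 : ∀ n : ℕ, 0 ≤ f x - ∑ i ∈ Finset.range (n+1), iteratedDeriv i f 0 / i.factorial * x ^ i := by
    intro n
    obtain ⟨ξ, hξ, h⟩ := aux_taylor hf hx n
    simp only [sub_zero] at h
    have := h0 (n+1) ξ hξ.1.le
    have : 0 ≤ iteratedDeriv (n+1) f ξ / (n+1).factorial * x^(n+1) := by positivity
    linarith
  have hlim : Tendsto (fun n : ℕ => f (x + 2 * x) * (1/2:ℝ)^(n+1)) atTop (nhds 0) := by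
    have := ((tendsto_pow_atTop_nhds_zero_of_lt_one (r := (1/2:ℝ)) (by norm_num) (by norm_num)).comp
      (tendsto_add_atTop_nat 1)).const_mul (f (x + 2 * x))
    simpa using this
  have := squeeze_zero hbd2 hbd hlim
  have h7 := this.const_sub (f x)
  simpa using h7

lemma aux_nonneg {f : ℝ → ℝ} (hf : ContDiff ℝ (⊤ : ℕ∞) f) (hp : ∀ x, 0 ≤ x → 0 ≤ f x) (n : ℕ)
    (hv : ∀ k < n, iteratedDeriv k f 0 = 0) : 0 ≤ iteratedDeriv n f 0 := by
  cases n with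
  | zero => simpa using hp 0 le_rfl
  | succ n =>
    by_contra! hneg
    have hc : Continuous (iteratedDeriv (n+1) f) :=
      hf.continuous_iteratedDeriv _ (by exact_mod_cast le_top)
    obtain ⟨ε, hε, h⟩ := Metric.eventually_nhds_iff.1 (hc.continuousAt.eventually_lt_const hneg)
    obtain ⟨ξ, hξ, ht⟩ := aux_taylor hf (show 0 < ε by exact hε) n
    rw [Finset.sum_eq_zero] at ht
    · have h1 := h (y := ξ) (by rw [Real.dist_eq, sub_zero, abs_of_pos hξ.1]; exact hξ.2)
      have h2 := hp ε hε.le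
      rw [ht, zero_add, sub_zero] at h2
      have : iteratedDeriv (n+1) f ξ / (n+1).factorial * ε^(n+1) < 0 := by
        apply mul_neg_of_neg_of_pos
        · apply div_neg_of_neg_of_pos h1; positivity
        · positivity
      linarith
    · intro k hk
      rw [hv k (Finset.mem_range.1 hk)]; simp

lemma aux_horn {G : ℝ → ℝ} (hG : ContDiff ℝ (⊤ : ℕ∞) G) {u : ℝ} (hu : u ∈ Ioo (0:ℝ) 1)
    (hp : ∀ p : Polynomial ℝ, (∀ x, 0 ≤ p.eval x) → ∀ a b : ℝ, 0 ≤ a → 0 ≤ b →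
      0 ≤ p.sum (fun j c => c * G (a + b * u ^ j))) (n : ℕ) (a : ℝ) (ha : 0 ≤ a) :
    0 ≤ iteratedDeriv n G a := by
  set p : Polynomial ℝ := ∏ m ∈ Finset.range n, (Polynomial.X - Polynomial.C (u ^ m)) ^ 2 with hpdef
  have hev : ∀ x, p.eval x = ∏ m ∈ Finset.range n, (x - u ^ m) ^ 2 := by
    intro x; simp [hpdef, Polynomial.eval_prod]
  have hpn : ∀ x, 0 ≤ p.eval x := fun x => by
    rw [hev]; exact Finset.prod_nonneg fun _ _ => sq_nonneg _
  set f : ℝ → ℝ := fun b => ∑ j ∈ p.support, p.coeff j * G (a + u ^ j * b) with hfdef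
  have hcomp : ∀ c : ℝ, ContDiff ℝ (⊤ : ℕ∞) (fun b => G (a + c * b)) := fun c =>
    hG.comp (by fun_prop)
  have hf : ContDiff ℝ (⊤ : ℕ∞) f := by
    apply ContDiff.sum; intro j _
    exact contDiff_const.mul (hcomp _)
  have hd : ∀ m, iteratedDeriv m f 0 = p.eval (u ^ m) * iteratedDeriv m G a := by
    intro m
    have : ∀ j, iteratedDeriv m (fun b => p.coeff j * G (a + u ^ j * b)) 0
        = p.coeff j * (u ^ m) ^ j * iteratedDeriv m G a := by
      intro j
      rw [iteratedDeriv_const_mul_field]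
      have h1 := iteratedDeriv_comp_const_mul (n := m) (f := fun z => G (a + z))
        ((hG.comp (by fun_prop : ContDiff ℝ (⊤ : ℕ∞) (fun z : ℝ => a + z))).of_le
          (by exact_mod_cast le_top)) (u ^ j)
      have h2 := congrFun h1 0
      have h3 := congrFun (iteratedDeriv_comp_const_add m G a) 0
      rw [h2]
      simp only [mul_zero]
      rw [h3, add_zero]
      ring
    rw [hfdef]
    rw [iteratedDeriv_fun_sum]
    · rw [Polynomial.eval_eq_sum, Polynomial.sum, Finset.sum_mul]
      exact Finset.sum_congr rfl fun j _ => this j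
    · intro j _
      exact ((contDiff_const.mul (hcomp _)).of_le (by exact_mod_cast le_top)).contDiffAt
  have hfn : ∀ x, 0 ≤ x → 0 ≤ f x := by
    intro x hx
    have := hp p hpn a x ha hx
    rw [Polynomial.sum] at this
    simpa [hfdef, mul_comm] using this
  have hfin := aux_nonneg hf hfn n (by
    intro k hk
    rw [hd, hev, Finset.prod_eq_zero (Finset.mem_range.2 hk), zero_mul]
    simp)
  rw [hd] at hfin
  refine nonneg_of_mul_nonneg_right hfin ?_
  rw [hev]
  refine Finset.prod_pos fun m hm => ?_
  have : u ^ n < u ^ m := pow_lt_pow_right_of_lt_one₀ hu.1 hu.2 (Finset.mem_range.1 hm)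
  have : u ^ n - u ^ m ≠ 0 := by linarith
  positivity

lemma aux_limit {c : ℕ → ℕ → ℝ} {f : ℕ → ℝ → ℝ} {F : ℝ → ℝ} (hc : ∀ m n, 0 ≤ c m n)
    (hs : ∀ m x, 0 ≤ x → HasSum (fun n => c m n * x ^ n) (f m x))
    (hl : ∀ x, 0 < x → Tendsto (fun m => f m x) atTop (nhds (F x))) :
    ∃ d : ℕ → ℝ, (∀ n, 0 ≤ d n) ∧ ∀ x, 0 < x → HasSum (fun n => d n * x ^ n) (F x) := by
  have hle : ∀ m n x, 0 < x → c m n * x ^ n ≤ f m x := fun m n x hx =>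
    le_hasSum (hs m x hx.le) n (fun j _ => mul_nonneg (hc m j) (by positivity))
  have hB : ∀ x, 0 < x → ∃ B, ∀ m, f m x ≤ B := fun x hx => by
    obtain ⟨B, hB⟩ := (hl x hx).bddAbove_range
    exact ⟨B, fun m => hB ⟨m, rfl⟩⟩
  choose! B hB using hB
  let U : Ultrafilter ℕ := hyperfilter ℕ
  have hU : (U : Filter ℕ) ≤ atTop := Nat.hyperfilter_le_atTop
  have : ∀ n, ∃ d ∈ Icc 0 (B 1), Tendsto (fun m => c m n) U (nhds d) := by
    intro n
    have := (isCompact_Icc (a := (0:ℝ)) (b := B 1)).ultrafilter_le_nhds (U.map (fun m => c m n)) (by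
      rw [le_principal_iff]
      refine Filter.Eventually.of_forall (f := (U : Filter ℕ)) fun m => ⟨hc m n, ?_⟩
      have := hle m n 1 one_pos
      simp only [one_pow, mul_one] at this
      exact this.trans (hB 1 one_pos m))
    obtain ⟨d, hd, h⟩ := this
    exact ⟨d, hd, h⟩
  choose d hd hdt using this
  refine ⟨d, fun n => (hd n).1, fun x hx => ?_⟩
  have hb : ∀ m n, c m n * x ^ n ≤ B (2 * x) * (1/2) ^ n := by
    intro m n
    have h1 := (hle m n (2 * x) (by positivity)).trans (hB _ (by positivity) m)
    have h2 : c m n * x ^ n = c m n * (2 * x) ^ n * (1/2)^n := by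
      rw [mul_assoc, ← mul_pow]; congr 2; ring
    rw [h2]; gcongr
  have hsum : Summable (fun n : ℕ => B (2 * x) * (1/2 : ℝ) ^ n) :=
    (summable_geometric_of_lt_one (by norm_num) (by norm_num)).mul_left _
  have ht := tendsto_tsum_of_dominated_convergence (𝓕 := (U : Filter ℕ))
    (f := fun m n => c m n * x ^ n) (g := fun n => d n * x ^ n) hsum
    (fun n => (hdt n).mul_const _)
    (Eventually.of_forall fun m n => by
      rw [Real.norm_of_nonneg (mul_nonneg (hc m n) (by positivity))]; exact hb m n)
  have ht2 : Tendsto (fun m => f m x) U (nhds (F x)) := (hl x hx).mono_left hU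
  have he : (fun m => ∑' n, c m n * x ^ n) = fun m => f m x := by
    ext m; exact (hs m x hx.le).tsum_eq
  rw [he] at ht
  rw [tendsto_nhds_unique ht2 ht]
  refine (Summable.of_nonneg_of_le (fun n => mul_nonneg (hd n).1 (by positivity)) (fun n => ?_) hsum).hasSum
  exact le_of_tendsto ((hdt n).mul_const _) (Eventually.of_forall fun m => hb m n)

open scoped Convolution in
lemma aux_mollify {H : ℝ → ℝ} (hm : Monotone H) (hc : ∀ x, 0 < x → ContinuousAt H x)
    {u : ℝ} (hu : u ∈ Ioo (0:ℝ) 1)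
    (hp : ∀ p : Polynomial ℝ, (∀ x, 0 ≤ p.eval x) → ∀ a b : ℝ, 0 ≤ a → 0 ≤ b →
      0 ≤ p.sum (fun j c => c * H (a + b * u ^ j))) :
    ∃ d : ℕ → ℝ, (∀ n, 0 ≤ d n) ∧ ∀ x, 0 < x → HasSum (fun n => d n * x ^ n) (H x) := by
  let δ : ℕ → ℝ := fun m => 1 / ((m : ℝ) + 1)
  have hδ : ∀ m, 0 < δ m := fun m => by positivity
  have hδ0 : Tendsto δ atTop (nhds 0) := tendsto_one_div_add_atTop_nhds_zero_nat
  let φ : ℕ → ContDiffBump (0 : ℝ) := fun m =>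
    ⟨δ m / 2, δ m, half_pos (hδ m), half_lt_self (hδ m)⟩
  have hloc : LocallyIntegrable H volume := hm.locallyIntegrable
  let f : ℕ → ℝ → ℝ := fun m x =>
    ((φ m).normed volume ⋆[ContinuousLinearMap.lsmul ℝ ℝ, volume] H) (x + 2 * δ m)
  have hsm : ∀ m, ContDiff ℝ (⊤ : ℕ∞) (f m) := by
    intro m
    have h1 : ContDiff ℝ (⊤ : ℕ∞)
        ((φ m).normed volume ⋆[ContinuousLinearMap.lsmul ℝ ℝ, volume] H) :=
      (φ m).hasCompactSupport_normed.contDiff_convolution_left _ (φ m).contDiff_normed hloc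
    exact h1.comp (by fun_prop)
  have hint : ∀ m x, Integrable (fun t => (φ m).normed volume t * H (x - t)) := by
    intro m x
    have := (φ m).hasCompactSupport_normed (μ := volume) |>.convolutionExists_left
      (ContinuousLinearMap.lsmul ℝ ℝ) (φ m).continuous_normed hloc x
    simpa [ConvolutionExistsAt] using this
  have hpos : ∀ m n x, 0 ≤ x → 0 ≤ iteratedDeriv n (f m) x := by
    intro m n x hx
    refine aux_horn (hsm m) hu ?_ n x hx
    intro p hpp a b ha hb
    have he : p.sum (fun j c => c * f m (a + b * u ^ j)) =
        ∫ t, (φ m).normed volume t * p.sum (fun j c => c * H (a + 2 * δ m - t + b * u ^ j)) := by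
      simp only [Polynomial.sum, Finset.mul_sum]
      rw [integral_finsetSum]
      · refine Finset.sum_congr rfl fun j _ => ?_
        simp only [f, convolution, ContinuousLinearMap.lsmul_apply, smul_eq_mul]
        rw [← integral_const_mul]
        congr 1; ext t
        rw [show a + b * u ^ j + 2 * δ m - t = a + 2 * δ m - t + b * u ^ j by ring]
        ring
      · intro j _
        have := (hint m (a + b * u ^ j + 2 * δ m)).const_mul (p.coeff j)
        refine this.congr (Eventually.of_forall fun t => ?_)
        simp only []
        rw [show a + b * u ^ j + 2 * δ m - t = a + 2 * δ m - t + b * u ^ j by ring]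
        ring
    rw [he]
    refine integral_nonneg fun t => ?_
    by_cases ht : t ∈ Function.support ((φ m).normed volume)
    · rw [ContDiffBump.support_normed_eq, Metric.mem_ball, Real.dist_eq, sub_zero, abs_lt] at ht
      refine mul_nonneg ((φ m).nonneg_normed t) (hp p hpp _ b ?_ hb)
      have : (φ m).rOut = δ m := rfl
      have := hδ m
      linarith [ht.2]
    · rw [Function.notMem_support] at ht
      simp [ht]
  refine aux_limit (c := fun m n => iteratedDeriv n (f m) 0 / n.factorial) (f := f)
    (fun m n => div_nonneg (hpos m n 0 le_rfl) (by positivity))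
    (fun m x hx => aux_bernstein (hsm m) (hpos m) x hx) ?_
  intro x hx
  refine ContDiffBump.convolution_tendsto_right (φ := φ) (g := fun _ => H) (x₀ := x) hδ0
    (Eventually.of_forall fun _ => hloc.aestronglyMeasurable) ?_ ?_
  · exact (hc x hx).tendsto.comp tendsto_snd
  · simpa using (hδ0.const_mul 2).const_add x

lemma aux_poly {s : ℕ → ℝ} (hs : s ∈ momentSet univ) (p : Polynomial ℝ)
    (hp : ∀ x, 0 ≤ p.eval x) : 0 ≤ p.sum (fun j c => c * s j) := by
  obtain ⟨μ, hμ, -, h⟩ := hs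
  have : p.sum (fun j c => c * s j) = ∫ x, p.eval x ∂μ := by
    simp only [Polynomial.sum, Polynomial.eval_eq_sum]
    rw [integral_finsetSum _ (fun j _ => (hμ j).const_mul _)]
    refine Finset.sum_congr rfl fun j _ => ?_
    rw [integral_const_mul, h, moment]
  rw [this]
  exact integral_nonneg hp

lemma aux_quad {s : ℕ → ℝ} (hs : s ∈ momentSet univ) (x y : ℝ) :
    0 ≤ x ^ 2 * s 0 + 2 * x * y * s 1 + y ^ 2 * s 2 := by
  obtain ⟨μ, hμ, -, h⟩ := hs
  have : x ^ 2 * s 0 + 2 * x * y * s 1 + y ^ 2 * s 2 = ∫ t, (x + y * t) ^ 2 ∂μ := by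
    have e : ∀ t : ℝ, (x + y * t) ^ 2 = x ^ 2 * t ^ 0 + 2 * x * y * t ^ 1 + y ^ 2 * t ^ 2 := by
      intro t; ring
    simp_rw [e]
    rw [integral_add, integral_add, integral_const_mul, integral_const_mul, integral_const_mul]
    · simp only [h, moment]
    · exact (hμ 0).const_mul _
    · exact (hμ 1).const_mul _
    · exact ((hμ 0).const_mul _).add ((hμ 1).const_mul _)
    · exact (hμ 2).const_mul _
  rw [this]
  exact integral_nonneg fun t => sq_nonneg _

lemma aux_cs {s : ℕ → ℝ} (hs : s ∈ momentSet univ) : s 1 ^ 2 ≤ s 0 * s 2 := by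
  have h := fun x => aux_quad hs x 1
  have := discrim_le_zero (a := s 0) (b := 2 * s 1) (c := s 2) (fun x => by have := h x; nlinarith)
  rw [discrim] at this
  nlinarith

lemma aux_two {x y a b : ℝ} (ha : 0 ≤ a) (hb : 0 ≤ b) {K : Set ℝ} (hx : x ∈ K) (hy : y ∈ K) :
    (fun k => a * x ^ k + b * y ^ k) ∈ momentSet K := by
  have i : ∀ (z c : ℝ) (k : ℕ), Integrable (fun t : ℝ => t ^ k) (ENNReal.ofReal c • Measure.dirac z) :=
    fun z c k => (integrable_dirac (by simp)).smul_measure ENNReal.ofReal_ne_top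
  refine ⟨ENNReal.ofReal a • Measure.dirac x + ENNReal.ofReal b • Measure.dirac y, ?_, ?_, ?_⟩
  · intro k
    exact (i x a k).add_measure (i y b k)
  · simp [hx, hy]
  · intro k
    rw [moment, integral_add_measure (i x a k) (i y b k)]
    simp [integral_smul_measure, ha, hb]

lemma aux_mono {K L : Set ℝ} (h : K ⊆ L) : momentSet K ⊆ momentSet L := by
  rintro s ⟨μ, h1, h2, h3⟩
  exact ⟨μ, h1, measure_mono_null (compl_subset_compl.2 h) h2, h3⟩

lemma aux_adm (ν : Measure ℝ) [IsFiniteMeasure ν] (h : ν (Icc (0:ℝ) 1)ᶜ = 0) : IsAdmissible ν := by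
  intro k
  refine Integrable.of_bound (by fun_prop) 1 ?_
  have : ∀ᵐ x ∂ν, x ∈ Icc (0:ℝ) 1 := by rw [ae_iff]; exact h
  filter_upwards [this] with x hx
  rw [norm_pow, Real.norm_of_nonneg hx.1]
  exact pow_le_one₀ hx.1 hx.2

lemma aux_fin {μ : Measure ℝ} (h : IsAdmissible μ) : IsFiniteMeasure μ := by
  have := h 0
  simp only [pow_zero] at this
  have := (integrable_const_iff (c := (1:ℝ))).1 this
  simpa using this

lemma aux_pow {μ : Measure ℝ} (h : IsAdmissible μ) (hs : μ (Icc (0:ℝ) 1)ᶜ = 0) (n : ℕ) :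
    ∃ ν : Measure ℝ, IsFiniteMeasure ν ∧ ν (Icc (0:ℝ) 1)ᶜ = 0 ∧
      ∀ k, moment ν k = moment μ k ^ n := by
  have := aux_fin h
  induction n with
  | zero => exact ⟨Measure.dirac 1, inferInstance, by simp, by simp [moment]⟩
  | succ n ih =>
    obtain ⟨ν, hf, hν, hm⟩ := ih
    have hme : Measurable (fun z : ℝ × ℝ => z.1 * z.2) := by fun_prop
    refine ⟨(μ.prod ν).map (fun z => z.1 * z.2), inferInstance, ?_, ?_⟩
    · rw [Measure.map_apply hme measurableSet_Icc.compl]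
      refine measure_mono_null (t := (Icc (0:ℝ) 1)ᶜ ×ˢ univ ∪ univ ×ˢ (Icc (0:ℝ) 1)ᶜ) ?_ ?_
      · rintro ⟨x, y⟩ hxy
        by_contra hcon
        simp only [mem_union, mem_prod, mem_univ, and_true, true_and, mem_compl_iff, not_or,
          not_not] at hcon
        obtain ⟨h1, h2⟩ := hcon
        exact hxy ⟨mul_nonneg h1.1 h2.1, mul_le_one₀ h1.2 h2.1 h2.2⟩
      · rw [measure_union_null_iff]
        simp [Measure.prod_prod, hs, hν]
    · intro k
      rw [moment, integral_map hme.aemeasurable (by fun_prop)]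
      simp only [mul_pow]
      rw [integral_prod_mul (fun x : ℝ => x ^ k) (fun y : ℝ => y ^ k)]
      change moment μ k * moment ν k = _
      rw [hm]; ring

lemma aux_ser {μ : Measure ℝ} (h : IsAdmissible μ) (hs : μ (Icc (0:ℝ) 1)ᶜ = 0)
    {c : ℕ → ℝ} (hc : ∀ n, 0 ≤ c n) {G : ℝ → ℝ} (hG : ∀ x, HasSum (fun n => c n * x ^ n) (G x)) :
    (fun k => G (moment μ k)) ∈ momentSet (Icc (0:ℝ) 1) := by
  have := aux_fin h
  choose ν hf hν hm using aux_pow h hs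
  have h0 : 0 ≤ moment μ 0 := by simp [moment]
  let ρ : Measure ℝ := Measure.sum (fun n => ENNReal.ofReal (c n) • ν n)
  have hmass : ∀ n, ν n univ = ENNReal.ofReal (moment μ 0 ^ n) := by
    intro n
    rw [← hm n 0]
    simp [moment]
  have hfin : IsFiniteMeasure ρ := by
    refine ⟨?_⟩
    simp only [ρ, Measure.sum_apply _ MeasurableSet.univ, Measure.smul_apply, smul_eq_mul, hmass]
    have e : ∀ n, ENNReal.ofReal (c n) * ENNReal.ofReal (moment μ 0 ^ n) =
        ENNReal.ofReal (c n * moment μ 0 ^ n) := fun n => (ENNReal.ofReal_mul (hc n)).symm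
    simp_rw [e]
    rw [← ENNReal.ofReal_tsum_of_nonneg (fun n => mul_nonneg (hc n) (pow_nonneg h0 n))
      (hG _).summable]
    exact ENNReal.ofReal_lt_top
  have hsup : ρ (Icc (0:ℝ) 1)ᶜ = 0 := by
    simp only [ρ, Measure.sum_apply _ measurableSet_Icc.compl, Measure.smul_apply, hν]
    simp
  refine ⟨ρ, aux_adm ρ hsup, hsup, fun k => ?_⟩
  have h1 := hasSum_integral_measure (aux_adm ρ hsup k)
  refine (hG (moment μ k)).unique ?_
  have he : (fun n => c n * moment μ k ^ n) =
      fun i => ∫ x : ℝ, x ^ k ∂(ENNReal.ofReal (c i) • ν i) := by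
    ext n
    rw [integral_smul_measure, ENNReal.toReal_ofReal (hc n), smul_eq_mul, ← hm n k, moment]
  rw [he]
  exact h1

lemma aux_cont {H : ℝ → ℝ} (hm : Monotone H) (hn : ∀ x, 0 ≤ H x)
    (hi : ∀ a b : ℝ, 0 ≤ a → 0 ≤ b → H (Real.sqrt (a * b)) ^ 2 ≤ H a * H b)
    (x : ℝ) (hx : 0 < x) : ContinuousAt H x := by
  rw [hm.continuousAt_iff_leftLim_eq_rightLim]
  refine le_antisymm (hm.leftLim_le_rightLim le_rfl) ?_
  have hL := hm.tendsto_leftLim x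
  have hR := hm.tendsto_rightLim x
  have hself : ∀ᶠ t : ℝ in nhdsWithin 1 (Ioi 1), 1 < t := self_mem_nhdsWithin
  have t1 : Tendsto (fun t : ℝ => x * t) (nhdsWithin 1 (Ioi 1)) (nhdsWithin x (Ioi x)) := by
    refine tendsto_nhdsWithin_iff.2 ⟨?_, ?_⟩
    · have : ContinuousAt (fun t : ℝ => x * t) 1 := by fun_prop
      have := this.tendsto.mono_left (nhdsWithin_le_nhds (s := Ioi 1))
      simpa using this
    · filter_upwards [hself] with t ht
      exact (lt_mul_iff_one_lt_right hx).2 ht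
  have t2 : Tendsto (fun t : ℝ => x * t ^ 3) (nhdsWithin 1 (Ioi 1)) (nhdsWithin x (Ioi x)) := by
    refine tendsto_nhdsWithin_iff.2 ⟨?_, ?_⟩
    · have : ContinuousAt (fun t : ℝ => x * t ^ 3) 1 := by fun_prop
      have := this.tendsto.mono_left (nhdsWithin_le_nhds (s := Ioi 1))
      simpa using this
    · filter_upwards [hself] with t ht
      exact (lt_mul_iff_one_lt_right hx).2 (one_lt_pow₀ ht (by norm_num))
  have t3 : Tendsto (fun t : ℝ => x / t) (nhdsWithin 1 (Ioi 1)) (nhdsWithin x (Iio x)) := by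
    refine tendsto_nhdsWithin_iff.2 ⟨?_, ?_⟩
    · have : ContinuousAt (fun t : ℝ => x / t) 1 := by fun_prop (disch := norm_num)
      have := this.tendsto.mono_left (nhdsWithin_le_nhds (s := Ioi 1))
      simpa using this
    · filter_upwards [hself] with t ht
      exact div_lt_self hx ht
  have hle : Function.rightLim H x ^ 2 ≤ Function.leftLim H x * Function.rightLim H x := by
    refine le_of_tendsto_of_tendsto ((hR.comp t1).pow 2) ((hL.comp t3).mul (hR.comp t2)) ?_
    filter_upwards [hself] with t ht
    have h0 : 0 < t := by linarith
    have := hi (x / t) (x * t ^ 3) (by positivity) (by positivity)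
    rw [show x / t * (x * t ^ 3) = (x * t) ^ 2 by field_simp,
      Real.sqrt_sq (by positivity)] at this
    exact this
  have hL0 : 0 ≤ Function.leftLim H x := ge_of_tendsto hL (Eventually.of_forall hn)
  by_contra! hcon
  nlinarith

lemma aux_basic {F : ℝ → ℝ}
    (h : ∀ s ∈ momentSet ({0, 1} : Set ℝ), (fun k => F (s k)) ∈ momentSet (Set.univ : Set ℝ)) :
    (∀ a, 0 ≤ a → 0 ≤ F a) ∧ Monotone (fun x => F (max x 0)) := by
  have key : ∀ a b, 0 ≤ a → 0 ≤ b → 0 ≤ F a ∧ F a ≤ F (a + b) := by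
    intro a b ha hb
    have hs := h _ (aux_two (x := 1) (y := 0) ha hb (K := {0, 1}) (by simp) (by simp))
    have h1 := aux_quad hs 0 1
    have h2 := aux_quad hs 1 (-1)
    simp at h1 h2
    exact ⟨h1, by linarith⟩
  refine ⟨fun a ha => (key a 0 ha le_rfl).1, fun x y hxy => ?_⟩
  have := (key (max x 0) (max y 0 - max x 0) (le_max_right _ _)
    (sub_nonneg.2 (max_le_max_right 0 hxy))).2
  simpa using this

lemma aux_13 {F : ℝ → ℝ} {u₀ : ℝ} (hu₀ : u₀ ∈ Set.Ioo (0 : ℝ) 1)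
    (h : ∀ s ∈ momentSet ({1, u₀} : Set ℝ) ∪ momentSet ({0, 1} : Set ℝ),
          (fun k => F (s k)) ∈ momentSet (Set.univ : Set ℝ))
    (hc : ∀ x, 0 < x → ContinuousAt (fun x => F (max x 0)) x) :
    ∃ G : ℝ → ℝ, AbsolutelyMonotonicEntire G ∧ (∀ x > (0 : ℝ), F x = G x) ∧
          0 ≤ F 0 ∧ ∃ L : ℝ, Tendsto F (nhdsWithin 0 (Set.Ioi 0)) (nhds L) ∧ F 0 ≤ L := by
  obtain ⟨hn, hm⟩ := aux_basic (fun s hs => h s (Or.inr hs))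
  obtain ⟨d, hd, hsum⟩ := aux_mollify hm hc hu₀ (by
    intro p hp a b ha hb
    have hs := h _ (Or.inl (aux_two (x := 1) (y := u₀) ha hb (K := {1, u₀}) (by simp) (by simp)))
    have := aux_poly hs p hp
    convert this using 3 with j c
    have : 0 ≤ a + b * u₀ ^ j := by have := hu₀.1; positivity
    rw [max_eq_left this]; simp)
  have hS : ∀ x : ℝ, Summable (fun n => d n * x ^ n) := by
    intro x
    refine Summable.of_norm_bounded (hsum (|x| + 1) (by positivity)).summable fun n => ?_
    rw [norm_mul, norm_pow, Real.norm_of_nonneg (hd n), Real.norm_eq_abs]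
    have := hd n
    gcongr
    linarith
  have hFG : ∀ x > (0:ℝ), F x = ∑' n, d n * x ^ n := by
    intro x hx
    have := (hsum x hx).tsum_eq
    rw [this, max_eq_left hx.le]
  have hF0 : ∀ x > (0:ℝ), F 0 ≤ F x := by
    intro x hx
    have := hm hx.le
    simpa [max_eq_left hx.le] using this
  have hlim : Tendsto F (nhdsWithin 0 (Set.Ioi 0)) (nhds (∑' n, d n * (0:ℝ) ^ n)) := by
    have h1 := tendsto_tsum_of_dominated_convergence (𝓕 := nhdsWithin (0:ℝ) (Ioi 0))
      (f := fun x n => d n * x ^ n) (g := fun n => d n * (0:ℝ) ^ n)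
      (bound := fun n => d n * 1 ^ n) (hS 1) (by
        intro n
        have : ContinuousAt (fun x : ℝ => d n * x ^ n) 0 := by fun_prop
        exact this.tendsto.mono_left nhdsWithin_le_nhds) (by
        filter_upwards [Ioo_mem_nhdsGT (zero_lt_one (α := ℝ))] with x hx n
        have := hd n
        rw [norm_mul, norm_pow, Real.norm_of_nonneg (hd n), Real.norm_of_nonneg hx.1.le]
        have h0 := hx.1.le
        have h1 := hx.2.le
        gcongr)
    refine h1.congr' ?_
    filter_upwards [self_mem_nhdsWithin] with x hx
    exact (hFG x hx).symm
  refine ⟨fun x => ∑' n, d n * x ^ n, ⟨d, hd, fun x => (hS x).hasSum⟩, hFG, hn 0 le_rfl, _, hlim, ?_⟩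
  refine ge_of_tendsto hlim ?_
  filter_upwards [self_mem_nhdsWithin] with x hx
  exact hF0 x hx

lemma aux_32 {F : ℝ → ℝ} (h : ∃ G : ℝ → ℝ, AbsolutelyMonotonicEntire G ∧
      (∀ x > (0 : ℝ), F x = G x) ∧
          0 ≤ F 0 ∧ ∃ L : ℝ, Tendsto F (nhdsWithin 0 (Set.Ioi 0)) (nhds L) ∧ F 0 ≤ L) :
    ∀ s ∈ momentSet (Set.Icc (0 : ℝ) 1),
          (fun k => F (s k)) ∈ momentSet (Set.Icc (0 : ℝ) 1) := by
  obtain ⟨G, ⟨c, hc, hG⟩, hFG, h0, L, hL, hle⟩ := h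
  rintro s ⟨μ, hμ, hsup, hs⟩
  have := aux_fin hμ
  have hae : ∀ᵐ x ∂μ, x ∈ Icc (0:ℝ) 1 := by rw [ae_iff]; exact hsup
  have hpw : ∀ k, ∀ᵐ x ∂μ, 0 ≤ x ^ k := fun k => by
    filter_upwards [hae] with x hx using pow_nonneg hx.1 k
  have hsn : ∀ k, 0 ≤ s k := fun k => by
    rw [hs, moment]; exact integral_nonneg_of_ae (hpw k)
  -- F 0 ≤ F x for positive x
  have hF0 : ∀ x > (0:ℝ), F 0 ≤ F x := by
    intro x hx
    refine hle.trans (le_of_tendsto hL ?_)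
    filter_upwards [Ioo_mem_nhdsGT hx] with y hy
    rw [hFG y hy.1, hFG x hx]
    refine hasSum_le (fun n => ?_) (hG y) (hG x)
    have := hc n
    have := hy.1.le
    have := hy.2.le
    gcongr
  by_cases hall : ∀ k, 0 < s k
  · have : (fun k => F (s k)) = fun k => G (moment μ k) := by
      ext k; rw [hFG _ (hall k), hs]
    rw [this]
    exact aux_ser hμ hsup hc hG
  · push Not at hall
    obtain ⟨k, hk⟩ := hall
    have hk0 : ∫ x, x ^ k ∂μ = 0 := by
      have := le_antisymm hk (hsn k)
      rwa [hs, moment] at this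
    have hz := (integral_eq_zero_iff_of_nonneg_ae (hpw k) (hμ k)).1 hk0
    have hx0 : ∀ᵐ x ∂μ, x = 0 := by
      filter_upwards [hz] with x hx
      exact eq_zero_of_pow_eq_zero hx
    have hs0 : ∀ j, j ≠ 0 → s j = 0 := by
      intro j hj
      rw [hs, moment]
      refine integral_eq_zero_of_ae ?_
      filter_upwards [hx0] with x hx
      simp [hx, hj]
    have hd : 0 ≤ F (s 0) - F 0 := by
      rcases (hsn 0).eq_or_lt with h | h
      · rw [← h, sub_self]
      · linarith [hF0 _ h]
    have := aux_two (x := 1) (y := 0) h0 hd (K := Icc (0:ℝ) 1) (by simp) (by simp)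
    convert this using 1
    ext j
    rcases eq_or_ne j 0 with rfl | hj
    · simp
    · simp [hs0 j hj, hj]

lemma aux_21 {F : ℝ → ℝ} {u₀ : ℝ} (hu₀ : u₀ ∈ Set.Ioo (0 : ℝ) 1)
    (h : ∀ s ∈ momentSet (Set.Icc (0 : ℝ) 1),
          (fun k => F (s k)) ∈ momentSet (Set.Icc (0 : ℝ) 1)) :
    (∀ s ∈ momentSet ({1, u₀} : Set ℝ) ∪ momentSet ({0, 1} : Set ℝ),
          (fun k => F (s k)) ∈ momentSet (Set.univ : Set ℝ)) ∧
        (∀ a b : ℝ, 0 ≤ a → 0 ≤ b → F (Real.sqrt (a * b)) ^ 2 ≤ F a * F b) := by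
  constructor
  · intro s hs
    refine aux_mono (subset_univ _) (h s ?_)
    rcases hs with hs | hs
    · refine aux_mono ?_ hs
      rintro x (rfl | rfl)
      · simp
      · exact ⟨hu₀.1.le, hu₀.2.le⟩
    · refine aux_mono ?_ hs
      rintro x (rfl | rfl) <;> simp
  · have key : ∀ a b : ℝ, 0 ≤ b → b ≤ a → F (Real.sqrt (a * b)) ^ 2 ≤ F a * F b := by
      intro a b hb hab
      rcases (hb.trans hab).eq_or_lt with ha | ha
      · obtain rfl : b = 0 := by linarith
        subst ha
        simp [sq]
      · have hq : b / a ≤ 1 := (div_le_one ha).2 hab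
        have hq0 : 0 ≤ b / a := by positivity
        have hm : Real.sqrt (b / a) ∈ Icc (0:ℝ) 1 :=
          ⟨Real.sqrt_nonneg _, Real.sqrt_le_one.2 hq⟩
        have hs := aux_cs (aux_mono (subset_univ _)
          (h _ (aux_two (a := a) (b := 0) ha.le le_rfl hm hm)))
        simp only [pow_zero, zero_mul, add_zero, mul_one, pow_one, Real.sq_sqrt hq0] at hs
        have e1 : a * (b / a) = b := by field_simp
        have e2 : Real.sqrt (a * b) = a * Real.sqrt (b / a) := by
          rw [show a * b = a ^ 2 * (b / a) by field_simp, Real.sqrt_mul (by positivity),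
            Real.sqrt_sq ha.le]
        rw [e1] at hs
        rw [e2]; exact hs
    intro a b ha hb
    rcases le_total b a with hab | hab
    · exact key a b hb hab
    · rw [mul_comm a b, mul_comm (F a)]; exact key b a ha hab

/-- Classification of the entrywise preservers of `M([0,1])`, with a minimal test set. -/
theorem moment_transform_Icc_zero_one_general (u₀ : ℝ) (hu₀ : u₀ ∈ Set.Ioo (0 : ℝ) 1)
    (F : ℝ → ℝ) :
    (List.TFAE
      [(∀ s ∈ momentSet ({1, u₀} : Set ℝ) ∪ momentSet ({0, 1} : Set ℝ),
          (fun k => F (s k)) ∈ momentSet (Set.univ : Set ℝ)) ∧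
        (∀ a b : ℝ, 0 ≤ a → 0 ≤ b → F (Real.sqrt (a * b)) ^ 2 ≤ F a * F b),
        ∀ s ∈ momentSet (Set.Icc (0 : ℝ) 1),
          (fun k => F (s k)) ∈ momentSet (Set.Icc (0 : ℝ) 1),
        ∃ G : ℝ → ℝ, AbsolutelyMonotonicEntire G ∧ (∀ x > (0 : ℝ), F x = G x) ∧
          0 ≤ F 0 ∧ ∃ L : ℝ, Tendsto F (nhdsWithin 0 (Set.Ioi 0)) (nhds L) ∧ F 0 ≤ L]) ∧
    (ContinuousOn F (Set.Ioi 0) →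
      ((∀ s ∈ momentSet ({1, u₀} : Set ℝ) ∪ momentSet ({0, 1} : Set ℝ),
          (fun k => F (s k)) ∈ momentSet (Set.univ : Set ℝ)) ↔
        ∀ s ∈ momentSet (Set.Icc (0 : ℝ) 1),
          (fun k => F (s k)) ∈ momentSet (Set.Icc (0 : ℝ) 1))) := by
  have h13 : ((∀ s ∈ momentSet ({1, u₀} : Set ℝ) ∪ momentSet ({0, 1} : Set ℝ),
          (fun k => F (s k)) ∈ momentSet (Set.univ : Set ℝ)) ∧
        (∀ a b : ℝ, 0 ≤ a → 0 ≤ b → F (Real.sqrt (a * b)) ^ 2 ≤ F a * F b)) →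
      ∃ G : ℝ → ℝ, AbsolutelyMonotonicEntire G ∧ (∀ x > (0 : ℝ), F x = G x) ∧
          0 ≤ F 0 ∧ ∃ L : ℝ, Tendsto F (nhdsWithin 0 (Set.Ioi 0)) (nhds L) ∧ F 0 ≤ L := by
    rintro ⟨h1, h2⟩
    obtain ⟨hn, hm⟩ := aux_basic (fun s hs => h1 s (Or.inr hs))
    refine aux_13 hu₀ h1 (aux_cont hm (fun x => hn _ (le_max_right _ _)) ?_)
    intro a b ha hb
    have := h2 a b ha hb
    simpa [max_eq_left ha, max_eq_left hb, max_eq_left (Real.sqrt_nonneg (a * b))] using this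
  refine ⟨?_, ?_⟩
  · tfae_have 1 → 3 := h13
    tfae_have 3 → 2 := aux_32
    tfae_have 2 → 1 := aux_21 hu₀
    tfae_finish
  · intro hc
    refine ⟨fun h => aux_32 (aux_13 hu₀ h ?_), fun h => (aux_21 hu₀ h).1⟩
    intro x hx
    have h1 : ContinuousAt F x := hc.continuousAt (Ioi_mem_nhds hx)
    refine h1.congr ?_
    filter_upwards [Ioi_mem_nhds hx] with y hy
    rw [max_eq_left (le_of_lt hy)]
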